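/- Let R be a ring. The following are equivalent: (1) R has a left Artinian left quotient ring Q = C⁻¹R; (2) (a) R̄ is a left Goldie ring, (b) n is a nilpotent ideal, (c') there exists a submonoid C'' ⊆ C such that the image of C'' in R̄ equals C̄ (equivalently, every element of C̄ lifts to a regular element of R), (d) for every 1 ≤ i ≤ ν the left R̄-module f_i contains no infinite direct sum of nonzero submodules, and (e) for every c̄ ∈ C̄ the right multiplication map f_i → f_i, f ↦ f·c̄, is injective. Moreover, if these hold then C'' is a left Ore set in R, C''⁻¹R = Q, C''⁻¹n is the prime radical of Q and is nilpotent of nilpotency degree ν, and the map Q/C''⁻¹n → Q̄, c⁻¹r + C''⁻¹n ↦ c̄⁻¹r̄ (where c ∈ C'' with c̄ = c + n), is a ring isomorphism. -/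

import Mathlib

open Function

universe u v

/-- A regular element of a ring: a two-sided non-zero-divisor. -/
def IsRegElem {R : Type*} [Ring R] (c : R) : Prop :=
  (∀ x : R, c * x = 0 → x = 0) ∧ (∀ x : R, x * c = 0 → x = 0)

/-- The set `C` of regular elements of a ring. -/
def regSet (R : Type*) [Ring R] : Set R := {c : R | IsRegElem c}

/-- A (left) ideal is two-sided. -/
def Ideal.IsTwoSidedNC {R : Type*} [Ring R] (I : Ideal R) : Prop :=
  ∀ a ∈ I, ∀ r : R, a * r ∈ I

/-- A prime (two-sided) ideal of a possibly noncommutative ring. -/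
def Ideal.IsPrimeNC {R : Type*} [Ring R] (P : Ideal R) : Prop :=
  P ≠ ⊤ ∧ P.IsTwoSidedNC ∧ ∀ a b : R, (∀ r : R, a * r * b ∈ P) → a ∈ P ∨ b ∈ P

/-- The prime radical `n` of a ring: the intersection of all prime ideals. -/
def primeRadical (R : Type*) [Ring R] : Ideal R := sInf {P : Ideal R | P.IsPrimeNC}

/-- `n` is a nilpotent ideal. -/
def IsNilpotentIdeal {R : Type*} [Ring R] (I : Ideal R) : Prop := ∃ k : ℕ, I ^ (k + 1) = ⊥

/-- `φ : R →+* Q` realizes `Q` as a left quotient ring `C⁻¹R` of `R`:  `R` embeds in `Q`,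
every regular element of `R` becomes invertible in `Q`, and every element of `Q` has the
form `(φ c)⁻¹ * (φ r)` with `c` regular. -/
structure IsLeftQuotRing {R : Type u} {Q : Type v} [Ring R] [Ring Q] (φ : R →+* Q) : Prop where
  inj : Function.Injective φ
  isUnit : ∀ c : R, IsRegElem c → IsUnit (φ c)
  denom : ∀ q : Q, ∃ c r : R, IsRegElem c ∧ φ c * q = φ r

/-- Data of a left quotient ring of `R`. -/
structure LeftQuotData (R : Type u) [Ring R] : Type (u + 1) where
  Q : Type u
  [instQ : Ring Q]
  φ : R →+* Q
  quot : IsLeftQuotRing φ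

attribute [instance] LeftQuotData.instQ

/-- `R` has a left Artinian left quotient ring `Q = C⁻¹R`. -/
def HasArtinianLeftQuot (R : Type u) [Ring R] : Prop :=
  ∃ d : LeftQuotData R, IsArtinianRing d.Q

/-- A subset of a ring is a left annihilator. -/
def IsLeftAnnihilatorSet {R : Type*} [Ring R] (A : Set R) : Prop :=
  ∃ S : Set R, A = {r : R | ∀ s ∈ S, r * s = 0}

/-- The ascending chain condition on left annihilators. -/
def ACCLeftAnnihilators (R : Type*) [Ring R] : Prop :=
  ∀ f : ℕ → Set R, (∀ i, IsLeftAnnihilatorSet (f i)) → (∀ i j, i ≤ j → f i ⊆ f j) →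
    ∃ N, ∀ k, N ≤ k → f k = f N

/-- The module `M` contains no infinite direct sum of nonzero submodules. -/
def NoInfiniteIndepFamily (R : Type*) (M : Type*) [Ring R] [AddCommGroup M] [Module R M] : Prop :=
  ¬ ∃ f : ℕ → Submodule R M, (∀ i, f i ≠ ⊥) ∧ iSupIndep f

/-- A left Goldie ring: ACC on left annihilators and no infinite direct sums of nonzero
left ideals. -/
def IsLeftGoldie (R : Type*) [Ring R] : Prop :=
  ACCLeftAnnihilators R ∧ NoInfiniteIndepFamily R R

/-- The subquotient `n^i/n^{i+1}` of `R` determined by the prime radical `n`. -/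
abbrev grPiece (R : Type*) [Ring R] (i : ℕ) :=
  ↥(primeRadical R ^ i) ⧸
    (Submodule.comap (primeRadical R ^ i : Ideal R).subtype (primeRadical R ^ (i + 1)))

/-- The class of `x ∈ n^i` in `n^i/n^{i+1}`. -/
def grMk {R : Type*} [Ring R] (i : ℕ) (x : R) (hx : x ∈ primeRadical R ^ i) : grPiece R i :=
  Submodule.Quotient.mk ⟨x, hx⟩

/-- The `C̄`-torsion submodule `τ_i` of `n^i/n^{i+1}` (take the span, which coincides with the
set of torsion elements whenever the latter is a submodule, e.g. when `C̄` is a left Ore set);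
here `C̄` is represented through `π : R → R̄` as `{c : R | IsRegElem (π c)}`. -/
def tauSub {R : Type u} {Rbar : Type v} [Ring R] [Ring Rbar] (π : R →+* Rbar) (i : ℕ) :
    Submodule R (grPiece R i) :=
  Submodule.span R {u : grPiece R i | ∃ c : R, IsRegElem (π c) ∧ c • u = 0}

/-- The `C̄`-torsionfree module `f_i = (n^i/n^{i+1})/τ_i`. -/
abbrev fMod {R : Type u} {Rbar : Type v} [Ring R] [Ring Rbar] (π : R →+* Rbar) (i : ℕ) :=
  grPiece R i ⧸ tauSub π i

/-- The class of `x ∈ n^i` in `f_i`. -/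
def fMk {R : Type u} {Rbar : Type v} [Ring R] [Ring Rbar] (π : R →+* Rbar) (i : ℕ) (x : R)
    (hx : x ∈ primeRadical R ^ i) : fMod π i :=
  Submodule.Quotient.mk (grMk i x hx)

/-- The subset `C⁻¹K = {(φ c)⁻¹ (φ a) : c ∈ C, a ∈ K}` of a left quotient ring. -/
def locSet {R : Type u} {Q : Type v} [Ring R] [Ring Q] (φ : R →+* Q) (K : Ideal R) : Set Q :=
  {q : Q | ∃ c a : R, IsRegElem c ∧ a ∈ K ∧ φ c * q = φ a}

/-- A subset of a ring is a left Ore set (multiplicatively closed and satisfying the left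
Ore condition). -/
def IsLeftOreSubset {A : Type*} [Ring A] (S : Set A) : Prop :=
  (1 : A) ∈ S ∧ (∀ s ∈ S, ∀ t ∈ S, s * t ∈ S) ∧
    ∀ s ∈ S, ∀ a : A, ∃ t ∈ S, ∃ b : A, t * a = b * s

/-- A left denominator set. -/
def IsLeftDenominatorSet {A : Type*} [Ring A] (S : Set A) : Prop :=
  IsLeftOreSubset S ∧ ∀ a : A, ∀ s ∈ S, a * s = 0 → ∃ t ∈ S, t * a = 0

section Goldie

/-- If a family of submodules is dominated by an antitone sequence in such a way that each
member meets the next term of the sequence trivially, then the family is independent. -/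
theorem iSupIndep_of_antitone_of_inf_eq_bot {R M : Type*} [Ring R] [AddCommGroup M] [Module R M]
    {L D : ℕ → Submodule R M} (hD : Antitone D) (hL : ∀ i, L i ≤ D i)
    (hLD : ∀ i, L i ⊓ D (i + 1) = ⊥) : iSupIndep L := by
  rw [iSupIndep_iff_finsetSum_eq_zero_imp_eq_zero]
  intro s v hv hsum
  by_contra! hne
  have hex : ∃ i, i ∈ s ∧ v i ≠ 0 := hne
  classical
  obtain ⟨his, hi0⟩ := Nat.find_spec hex
  set i := Nat.find hex
  have hmin : ∀ j ∈ s, j < i → v j = 0 := fun j hj hji => by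
    by_contra h
    exact Nat.find_min hex hji ⟨hj, h⟩
  have h1 : v i + ∑ j ∈ s.erase i, v j = 0 := by rw [Finset.add_sum_erase s v his, hsum]
  have h2 : ∑ j ∈ s.erase i, v j ∈ D (i + 1) := by
    refine Submodule.sum_mem _ fun j hj => ?_
    obtain ⟨hji, hjs⟩ := Finset.mem_erase.mp hj
    rcases lt_or_gt_of_ne hji with h | h
    · rw [hmin j hjs h]
      exact zero_mem _
    · exact hD h (hL j (hv j hjs))
  have h3 : v i ∈ D (i + 1) := by
    rw [eq_neg_of_add_eq_zero_left h1]
    exact neg_mem h2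
  have h4 : v i ∈ L i ⊓ D (i + 1) := ⟨hv i his, h3⟩
  rw [hLD, Submodule.mem_bot] at h4
  exact hi0 h4

/-- In a module without infinite direct sums of submodules, an antitone sequence of submodules
is eventually essential at each step. -/
theorem NoInfiniteIndepFamily.exists_forall_essential {R M : Type*} [Ring R] [AddCommGroup M]
    [Module R M] (h : NoInfiniteIndepFamily R M) {D : ℕ → Submodule R M} (hD : Antitone D) :
    ∃ N, ∀ k, N ≤ k → ∀ x ∈ D k, x ≠ 0 → ∃ r : R, r • x ≠ 0 ∧ r • x ∈ D (k + 1) := by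
  by_contra! hcon
  have hfreq : ∃ᶠ k in Filter.atTop,
      ∃ x ∈ D k, x ≠ 0 ∧ ∀ r : R, r • x ≠ 0 → r • x ∉ D (k + 1) :=
    Filter.frequently_atTop.mpr fun N => by
      obtain ⟨k, hk, x, hx, hx0, hr⟩ := hcon N
      exact ⟨k, hk, x, hx, hx0, hr⟩
  obtain ⟨σ, hσ, hx⟩ := Filter.extraction_of_frequently_atTop hfreq
  choose x hxD hx0 hr using hx
  refine h ⟨fun i => Submodule.span R {x i}, fun i => ?_, ?_⟩
  · simpa using hx0 i
  · refine iSupIndep_of_antitone_of_inf_eq_bot (D := fun i => D (σ i))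
      (hD.comp_monotone hσ.monotone) (fun i => ?_) (fun i => ?_)
    · simpa using hxD i
    · rw [eq_bot_iff]
      rintro y ⟨hy, hyD⟩
      obtain ⟨r, rfl⟩ := Submodule.mem_span_singleton.mp hy
      by_contra hne
      exact hr i r hne (hD (hσ (Nat.lt_succ_self i)) hyD)

variable {A : Type*} [Ring A]

/-- The left annihilator of an element, as a left ideal. -/
def leftAnn (a : A) : Ideal A := LinearMap.ker (LinearMap.toSpanSingleton A A a)

theorem mem_leftAnn {a r : A} : r ∈ leftAnn a ↔ r * a = 0 := by
  simp [leftAnn]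

theorem isLeftAnnihilatorSet_leftAnn (a : A) : IsLeftAnnihilatorSet (leftAnn a : Set A) :=
  ⟨{a}, by ext; simp [mem_leftAnn]⟩

/-- Under the ascending chain condition on left annihilators, the left annihilators of the
powers of an element stabilize. -/
theorem ACCLeftAnnihilators.exists_pow (h : ACCLeftAnnihilators A) (a : A) :
    ∃ N, ∀ k, N ≤ k → ∀ r : A, r * a ^ k = 0 → r * a ^ N = 0 := by
  obtain ⟨N, hN⟩ := h (fun k => (leftAnn (a ^ k) : Set A))
    (fun k => isLeftAnnihilatorSet_leftAnn _) (fun i j hij r hr => by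
      obtain ⟨m, rfl⟩ := Nat.exists_eq_add_of_le hij
      simp only [SetLike.mem_coe, mem_leftAnn] at hr ⊢
      rw [pow_add, ← mul_assoc, hr, zero_mul])
  refine ⟨N, fun k hk r hr => ?_⟩
  have : r ∈ (leftAnn (a ^ k) : Set A) := mem_leftAnn.mpr hr
  rw [hN k hk] at this
  exact mem_leftAnn.mp this

theorem ACCLeftAnnihilators.exists_maximal (h : ACCLeftAnnihilators A) {T : Set A}
    (hT : T.Nonempty) :
    ∃ a ∈ T, ∀ b ∈ T, leftAnn a ≤ leftAnn b → leftAnn b ≤ leftAnn a := by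
  have hwf : WellFoundedGT {S : Set A // IsLeftAnnihilatorSet S} := by
    rw [wellFoundedGT_iff_monotone_chain_condition]
    intro f
    obtain ⟨N, hN⟩ := h (fun i => (f i).1) (fun i => (f i).2) (fun i j hij => f.monotone hij)
    exact ⟨N, fun m hm => Subtype.ext (hN m hm).symm⟩
  let g : A → {S : Set A // IsLeftAnnihilatorSet S} :=
    fun a => ⟨leftAnn a, isLeftAnnihilatorSet_leftAnn a⟩
  obtain ⟨_, ⟨a, haT, rfl⟩, hmax⟩ := hwf.wf.has_min (g '' T) (hT.image g)
  refine ⟨a, haT, fun b hb hab => ?_⟩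
  by_contra hba
  exact hmax (g b) ⟨b, hb, rfl⟩ (lt_of_le_not_ge hab hba)

/-- A semiprime ring: `a A a = 0` implies `a = 0`. -/
def IsSemiprimeNC (A : Type*) [Ring A] : Prop := ∀ a : A, (∀ r : A, a * r * a = 0) → a = 0

theorem isNilpotent_mul_swap {a b : A} (h : IsNilpotent (a * b)) : IsNilpotent (b * a) := by
  obtain ⟨k, hk⟩ := h
  refine ⟨k + 1, ?_⟩
  have : ∀ m : ℕ, (b * a) ^ (m + 1) = b * (a * b) ^ m * a := by
    intro m
    induction m with
    | zero => simp
    | succ m ih => rw [_root_.pow_succ, ih, _root_.pow_succ]; noncomm_ring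
  rw [this, hk]
  simp

/-- A semiprime ring with the ascending chain condition on left annihilators has no nonzero
nil one-sided ideals. -/
theorem IsSemiprimeNC.eq_zero_of_nil (hs : IsSemiprimeNC A) (h : ACCLeftAnnihilators A) {x : A}
    (hx : ∀ y : A, IsNilpotent (y * x)) : x = 0 := by
  by_contra hx0
  obtain ⟨a, ⟨⟨y, rfl⟩, ha0⟩, hmax⟩ := h.exists_maximal (T := {a | (∃ y, a = x * y) ∧ a ≠ 0})
    ⟨x, ⟨1, by simp⟩, hx0⟩
  refine ha0 (hs _ fun r => ?_)
  by_cases hr : x * y * r = 0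
  · rw [hr, zero_mul]
  have hnil : IsNilpotent (x * y * r) := by
    rw [mul_assoc]
    exact isNilpotent_mul_swap (hx _)
  classical
  set z := x * y * r
  have hk := Nat.find_spec hnil
  set k := Nat.find hnil
  have hk2 : 1 < k := by
    by_contra hlt
    interval_cases h' : k
    · exact hr (by simpa using congrArg (z * ·) hk)
    · exact hr (by simpa using hk)
  obtain ⟨m, hm⟩ : ∃ m, k = m + 2 := ⟨k - 2, by omega⟩
  have hne : z ^ (m + 1) ≠ 0 := Nat.find_min hnil (show m + 1 < k by omega)
  have hle := hmax (z ^ (m + 1))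
    ⟨⟨y * r * z ^ m, by rw [_root_.pow_succ']; simp only [z, mul_assoc]⟩, hne⟩
    (fun s hs' => by
      rw [mem_leftAnn] at hs' ⊢
      rw [_root_.pow_succ', ← mul_assoc]
      simp only [z]
      rw [← mul_assoc, hs', zero_mul, zero_mul])
  have : z ∈ leftAnn (z ^ (m + 1)) := by
    rw [mem_leftAnn, ← _root_.pow_succ', ← hk, hm]
  exact mem_leftAnn.mp (hle this)

/-- In a semiprime ring with the ascending chain condition on left annihilators, an element
with essential left annihilator vanishes. -/
theorem IsSemiprimeNC.eq_zero_of_essential_leftAnn (hs : IsSemiprimeNC A)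
    (h : ACCLeftAnnihilators A) {x : A}
    (hx : ∀ a : A, a ≠ 0 → ∃ t : A, t * a ≠ 0 ∧ t * a * x = 0) : x = 0 := by
  refine hs.eq_zero_of_nil h fun y => ?_
  obtain ⟨N, hN⟩ := h.exists_pow (y * x)
  refine ⟨N, ?_⟩
  by_contra hne
  set z := y * x with hz
  by_cases hzy : z ^ N * y = 0
  · refine hne (hN (N + N + 1) (by omega) 1 ?_ |> fun h => by simpa using h)
    rw [one_mul, show N + N + 1 = N + 1 + N by omega, pow_add, _root_.pow_succ]
    nth_rewrite 2 [hz]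
    rw [← mul_assoc, hzy, zero_mul, zero_mul]
  · obtain ⟨t, ht, htx⟩ := hx _ hzy
    have h1 : t * z ^ (N + 1) = 0 := by
      rw [_root_.pow_succ]
      nth_rewrite 2 [hz]
      rw [← htx]
      simp only [mul_assoc]
    have h2 := hN (N + 1) (by omega) t h1
    exact ht (by rw [← mul_assoc, h2, zero_mul])

/-- In a ring without infinite direct sums of left ideals, a principal left ideal generated by
an element with zero left annihilator is essential. -/
theorem NoInfiniteIndepFamily.essential_of_leftAnn_eq_zero (h : NoInfiniteIndepFamily A A) {c : A}
    (hc : ∀ x, x * c = 0 → x = 0) {a : A} (ha : a ≠ 0) :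
    ∃ t : A, t * a ≠ 0 ∧ ∃ b, t * a = b * c := by
  have hcn : ∀ (n : ℕ) x, x * c ^ n = 0 → x = 0 := by
    intro n
    induction n with
    | zero => simp
    | succ n ih =>
      intro x hx
      rw [_root_.pow_succ, ← mul_assoc] at hx
      exact ih _ (hc _ hx)
  obtain ⟨N, hN⟩ := h.exists_forall_essential (D := fun n => Submodule.span A {c ^ n})
    (antitone_nat_of_succ_le fun n => by
      rw [Submodule.span_singleton_le_iff_mem, Submodule.mem_span_singleton]
      exact ⟨c, by rw [smul_eq_mul, ← _root_.pow_succ']⟩)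
  obtain ⟨r, hr0, hr⟩ := hN N le_rfl (a * c ^ N) (Submodule.mem_span_singleton.mpr ⟨a, rfl⟩)
    (fun h0 => ha (hcn N a h0))
  obtain ⟨b, hb⟩ := Submodule.mem_span_singleton.mp hr
  have hrab : r * a = b * c := by
    have : (r * a - b * c) * c ^ N = 0 := by
      rw [sub_mul, mul_assoc b, ← _root_.pow_succ', mul_assoc r]
      exact sub_eq_zero.mpr hb.symm
    exact sub_eq_zero.mp (hcn N _ this)
  exact ⟨r, fun h0 => hr0 (by rw [smul_eq_mul, ← mul_assoc, h0, zero_mul]), b, hrab⟩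

/-- In a semiprime left Goldie ring an element with zero left annihilator is regular. -/
theorem IsLeftGoldie.isRegElem_of_leftAnn_eq_zero (h : IsLeftGoldie A) (hs : IsSemiprimeNC A)
    {c : A} (hc : ∀ x, x * c = 0 → x = 0) : IsRegElem c := by
  refine ⟨fun x hx => hs.eq_zero_of_essential_leftAnn h.1 fun a ha => ?_, hc⟩
  obtain ⟨t, ht, b, hb⟩ := h.2.essential_of_leftAnn_eq_zero hc ha
  exact ⟨t, ht, by rw [hb, mul_assoc, hx, mul_zero]⟩

/-- An essential left ideal of a semiprime left Goldie ring contains a regular element. -/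
theorem IsLeftGoldie.exists_isRegElem_mem (h : IsLeftGoldie A) (hs : IsSemiprimeNC A)
    (E : Ideal A) (hE : ∀ a : A, a ≠ 0 → ∃ t : A, t * a ≠ 0 ∧ t * a ∈ E) :
    ∃ c ∈ E, IsRegElem c := by
  by_contra! hcon
  let T := {c : A // c ∈ E ∧ ∀ r, r * c * c = 0 → r * c = 0}
  have hstep : ∀ c : T, ∃ c' : T, leftAnn c'.1 ≤ leftAnn c.1 ∧
      ∃ a ∈ leftAnn c.1, a ≠ 0 ∧ ∀ r, r * a ∈ leftAnn c'.1 → r * a = 0 := by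
    rintro ⟨c, hcE, hc⟩
    have hc0 : ∃ x, x * c = 0 ∧ x ≠ 0 := by
      by_contra! h0
      exact hcon c hcE (h.isRegElem_of_leftAnn_eq_zero hs h0)
    obtain ⟨x, hxc, hx0⟩ := hc0
    obtain ⟨t, htx, htE⟩ := hE x hx0
    obtain ⟨y, hy⟩ : ∃ y, ¬ IsNilpotent (y * (t * x)) := by
      by_contra! h0
      exact htx (hs.eq_zero_of_nil h.1 h0)
    set b := y * (t * x) with hb
    have hbE : b ∈ E := E.mul_mem_left y htE
    have hbc : b * c = 0 := by rw [hb, mul_assoc, mul_assoc, hxc, mul_zero, mul_zero]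
    obtain ⟨N, hN⟩ := h.1.exists_pow b
    set a := b ^ (N + 1) with ha
    have haE : a ∈ E := by
      rw [ha, _root_.pow_succ]
      exact E.mul_mem_left _ hbE
    have hac : a * c = 0 := by rw [ha, _root_.pow_succ, mul_assoc, hbc, mul_zero]
    have ha0 : a ≠ 0 := fun h0 => hy ⟨_, h0⟩
    have haa : ∀ r, r * a * a = 0 → r * a = 0 := fun r hr => by
      have h1 : r * b ^ (N + 1 + (N + 1)) = 0 := by rw [pow_add, ← mul_assoc]; exact hr
      rw [ha, _root_.pow_succ, ← mul_assoc, hN _ (by omega) r h1, zero_mul]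
    have key : ∀ r, r * (c + a) = 0 → r * c = 0 ∧ r * a = 0 := fun r hr => by
      have h1 : r * c * c = 0 := by
        have : r * (c + a) * c = r * c * c + r * (a * c) := by noncomm_ring
        rw [hr, hac, zero_mul, mul_zero, add_zero] at this
        exact this.symm
      have h2 := hc r h1
      rw [mul_add, h2, zero_add] at hr
      exact ⟨h2, hr⟩
    refine ⟨⟨c + a, E.add_mem hcE haE, fun r hr => ?_⟩, fun r hr => ?_, a, ?_, ha0, fun r hr => ?_⟩
    · obtain ⟨h1, h2⟩ := key _ hr
      have h3 : r * c = 0 := hc r (by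
        have : r * (c + a) * c = r * c * c + r * (a * c) := by noncomm_ring
        rw [h1, hac, mul_zero, add_zero] at this
        exact this.symm)
      have h4 : r * a = 0 := haa r (by
        have : r * (c + a) * a = r * c * a + r * a * a := by noncomm_ring
        rw [h2, h3, zero_mul, zero_add] at this
        exact this.symm)
      rw [mul_add, h3, h4, add_zero]
    · exact mem_leftAnn.mpr (key r (mem_leftAnn.mp hr)).1
    · exact mem_leftAnn.mpr hac
    · exact haa r (key _ (mem_leftAnn.mp hr)).2
  choose next hnext a haD ha0 ha using hstep
  let c : ℕ → T := fun n => Nat.rec ⟨0, E.zero_mem, by simp⟩ (fun _ => next) n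
  obtain ⟨N, hN⟩ := h.2.exists_forall_essential (D := fun n => leftAnn (c n).1)
    (antitone_nat_of_succ_le fun n => hnext (c n))
  obtain ⟨r, hr0, hr⟩ := hN N le_rfl (a (c N)) (haD _) (ha0 _)
  exact hr0 (ha _ r hr)

end Goldie
section PrimeRadical

variable {R : Type*} [Ring R]

instance primeRadical_isTwoSided : (primeRadical R).IsTwoSided where
  mul_mem_of_left b ha := by
    simp only [primeRadical, Submodule.mem_sInf] at ha ⊢
    exact fun P hP => hP.2.1 _ (ha P hP) b

theorem mem_primeRadical_of_forall_mul_mul_mem {a : R}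
    (h : ∀ r : R, a * r * a ∈ primeRadical R) : a ∈ primeRadical R := by
  simp only [primeRadical, Submodule.mem_sInf] at h ⊢
  exact fun P hP => (hP.2.2 a a fun r => h r P hP).elim id id

theorem map_eq_zero_iff_mem_primeRadical {B : Type*} [Ring B] {π : R →+* B}
    (hker : RingHom.ker π = primeRadical R) {r : R} : π r = 0 ↔ r ∈ primeRadical R := by
  rw [← hker, RingHom.mem_ker]

theorem isSemiprimeNC_of_ker_eq_primeRadical {B : Type*} [Ring B] {π : R →+* B}
    (hsurj : Function.Surjective π) (hker : RingHom.ker π = primeRadical R) :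
    IsSemiprimeNC B := by
  intro a ha
  obtain ⟨a, rfl⟩ := hsurj a
  rw [map_eq_zero_iff_mem_primeRadical hker]
  refine mem_primeRadical_of_forall_mul_mul_mem fun r => ?_
  rw [← map_eq_zero_iff_mem_primeRadical hker, map_mul, map_mul, ha]

end PrimeRadical

section Localization

/-- A nonzero divisor on the right of a left Artinian ring is a unit. -/
theorem isUnit_of_forall_mul_eq_zero {Q : Type*} [Ring Q] [IsArtinianRing Q] {a : Q}
    (h : ∀ q, q * a = 0 → q = 0) : IsUnit a := by
  have hinj : Function.Injective (LinearMap.toSpanSingleton Q Q a) :=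
    (injective_iff_map_eq_zero _).mpr fun q hq => h q (by simpa using hq)
  obtain ⟨x, hx⟩ := (IsArtinian.bijective_of_injective_endomorphism _ hinj).2 1
  have hxa : x * a = 1 := by simpa using hx
  have hax : a * x = 1 := sub_eq_zero.mp (h _ (by rw [sub_mul, mul_assoc, hxa, mul_one, one_mul,
    sub_self]))
  exact ⟨⟨a, x, hax, hxa⟩, rfl⟩

theorem Ideal.mem_of_isUnit_mul_mem {Q : Type*} [Ring Q] (I : Ideal Q) {u q : Q} (hu : IsUnit u)
    (h : u * q ∈ I) : q ∈ I := by
  obtain ⟨u, rfl⟩ := hu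
  simpa using I.mul_mem_left (↑u⁻¹ : Q) h

/-- A left Ore set of regular elements admits a ring of left fractions. -/
theorem exists_ring_of_left_fractions {R : Type u} [Ring R] (S : Submonoid R)
    (hreg : ∀ s ∈ S, IsRegElem s) (hore : ∀ s ∈ S, ∀ a : R, ∃ t ∈ S, ∃ b, t * a = b * s) :
    ∃ (Q : Type u) (_ : Ring Q) (φ : R →+* Q), Function.Injective φ ∧ (∀ s ∈ S, IsUnit (φ s)) ∧
      ∀ q, ∃ s ∈ S, ∃ r, φ s * q = φ r := by
  have hO : Nonempty (OreLocalization.OreSet S) := by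
    rw [OreLocalization.nonempty_oreSet_iff]
    refine ⟨fun r₁ r₂ s h => ⟨1, ?_⟩, fun r s => ?_⟩
    · have := (hreg s s.2).2 (r₁ - r₂) (by rw [sub_mul, h, sub_self])
      rw [sub_eq_zero.mp this]
    · obtain ⟨t, ht, b, hb⟩ := hore s s.2 r
      exact ⟨b, ⟨t, ht⟩, hb⟩
  obtain ⟨hO⟩ := hO
  refine ⟨OreLocalization S R, inferInstance, OreLocalization.numeratorRingHom,
    OreLocalization.numeratorHom_inj fun s hs => ?_,
    fun s hs => OreLocalization.numerator_isUnit ⟨s, hs⟩, fun q => ?_⟩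
  · exact fun x hx => (hreg s hs).1 x hx
  · induction q using OreLocalization.ind with
    | _ r s =>
      exact ⟨s, s.2, r, OreLocalization.mul_cancel⟩

end Localization

section Sufficiency

/-- Along an antitone sequence of submodules of a module of finite uniform dimension over a
semiprime left Goldie ring, the successive quotients are eventually torsion. -/
theorem NoInfiniteIndepFamily.exists_forall_isRegElem_smul_mem {A B M : Type*} [Ring A] [Ring B]
    [AddCommGroup M] [Module A M] (h : NoInfiniteIndepFamily A M) {π : A →+* B}
    (hsurj : Function.Surjective π) (hB : IsLeftGoldie B) (hs : IsSemiprimeNC B)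
    (hker : ∀ a, π a = 0 → ∀ m : M, a • m = 0) {D : ℕ → Submodule A M} (hD : Antitone D) :
    ∃ N, ∀ k, N ≤ k → ∀ x ∈ D k, ∃ c, IsRegElem (π c) ∧ c • x ∈ D (k + 1) := by
  obtain ⟨N, hN⟩ := h.exists_forall_essential hD
  refine ⟨N, fun k hk x hx => ?_⟩
  let E : Ideal A := (D (k + 1)).comap (LinearMap.toSpanSingleton A M x)
  have hE : ∀ a, a ∈ E ↔ a • x ∈ D (k + 1) := fun a => by simp [E]
  obtain ⟨c, hcE, hc⟩ := hB.exists_isRegElem_mem hs (E.map π) fun b hb => by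
    obtain ⟨a, rfl⟩ := hsurj b
    by_cases hax : a • x = 0
    · refine ⟨1, by rwa [one_mul], ?_⟩
      rw [one_mul]
      refine Ideal.mem_map_of_mem π ((hE a).mpr ?_)
      rw [hax]
      exact zero_mem _
    · obtain ⟨r, hr0, hr⟩ := hN k hk _ ((D k).smul_mem a hx) hax
      rw [← mul_smul] at hr0 hr
      refine ⟨π r, fun h0 => hr0 (hker _ (by rw [map_mul, h0]) x), ?_⟩
      rw [← map_mul]
      exact Ideal.mem_map_of_mem π ((hE _).mpr hr)
  obtain ⟨a, haE, rfl⟩ := (Ideal.mem_map_iff_of_surjective π hsurj).mp hcE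
  exact ⟨a, hc, (hE a).mp haE⟩

variable {R : Type u} [Ring R]

/-- Along every antitone sequence of left ideals, the successive quotients of the images in
`n^i / n^(i+1)` are eventually `S`-torsion. -/
def GradedChainTorsion (S : Submonoid R) (i : ℕ) : Prop :=
  ∀ D : ℕ → Ideal R, Antitone D → ∃ N, ∀ k, N ≤ k → ∀ x ∈ D k, x ∈ primeRadical R ^ i →
    ∃ s ∈ S, ∃ y ∈ D (k + 1), y ∈ primeRadical R ^ i ∧ s * x - y ∈ primeRadical R ^ (i + 1)

/-- Right multiplication by elements of `S` is injective on `n^i / n^(i+1)` modulo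
`S`-torsion. -/
def GradedRightCancel (S : Submonoid R) (i : ℕ) : Prop :=
  ∀ s ∈ S, ∀ x ∈ primeRadical R ^ i, (∃ t ∈ S, t * (x * s) ∈ primeRadical R ^ (i + 1)) →
    ∃ t ∈ S, t * x ∈ primeRadical R ^ (i + 1)

theorem GradedRightCancel.pow {S : Submonoid R} {i : ℕ} (h : GradedRightCancel S i) {s : R}
    (hs : s ∈ S) (k : ℕ) : ∀ x ∈ primeRadical R ^ i,
    (∃ t ∈ S, t * (x * s ^ k) ∈ primeRadical R ^ (i + 1)) →
      ∃ t ∈ S, t * x ∈ primeRadical R ^ (i + 1) := by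
  induction k with
  | zero => simp
  | succ k ih =>
    intro x hx ht
    refine ih x hx (h s hs _ (Ideal.mul_mem_right _ _ hx) ?_)
    rwa [mul_assoc, ← _root_.pow_succ]

/-- The left Ore condition modulo `n^i` for all `i`, by induction along the filtration. -/
theorem exists_mul_sub_mul_mem_primeRadical_pow {S : Submonoid R} {i : ℕ}
    (hchain : ∀ j < i, GradedChainTorsion S j) (hcancel : ∀ j < i, GradedRightCancel S j) :
    ∀ s ∈ S, ∀ a : R, ∃ t ∈ S, ∃ b, t * a - b * s ∈ primeRadical R ^ i := by
  intro s hs a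
  induction i with
  | zero => exact ⟨1, S.one_mem, 0, by simp [Submodule.pow_zero, Ideal.one_eq_top]⟩
  | succ i ih =>
    obtain ⟨t, ht, b, hb⟩ := ih (fun j hj => hchain j (hj.trans i.lt_succ_self))
      fun j hj => hcancel j (hj.trans i.lt_succ_self)
    set y := t * a - b * s with hy
    obtain ⟨N, hN⟩  := hchain i i.lt_succ_self
      (fun k => Submodule.map (LinearMap.toSpanSingleton R R (s ^ k)) (primeRadical R ^ i))
      (antitone_nat_of_succ_le fun k => by
        rintro _ ⟨x, hx, rfl⟩
        refine ⟨x * s, Ideal.mul_mem_right _ _ hx, ?_⟩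
        simp [_root_.pow_succ', mul_assoc])
    obtain ⟨s', hs', _, ⟨b', hb', rfl⟩, -, hmem⟩ := hN N le_rfl (y * s ^ N)
      ⟨y, hb, by simp⟩ (Ideal.mul_mem_right _ _ hb)
    have heq : s' * (y * s ^ N) - LinearMap.toSpanSingleton R R (s ^ (N + 1)) b' =
        (s' * y - b' * s) * s ^ N := by
      simp [_root_.pow_succ', sub_mul, mul_assoc]
    rw [heq] at hmem
    have hb'' : b' ∈ primeRadical R ^ i := hb'
    obtain ⟨t', ht', hmem'⟩ := (hcancel i i.lt_succ_self).pow hs N (s' * y - b' * s)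
      (sub_mem (Ideal.mul_mem_left _ _ hb) (Ideal.mul_mem_right _ _ hb''))
      ⟨1, S.one_mem, by rwa [one_mul]⟩
    refine ⟨t' * s' * t, S.mul_mem (S.mul_mem ht' hs') ht, t' * s' * b + t' * b', ?_⟩
    convert hmem' using 1
    rw [hy]
    noncomm_ring

/-- If the chain condition holds on all layers of a finite filtration, the ring of left
fractions is left Artinian. -/
theorem isArtinianRing_of_gradedChainTorsion {S : Submonoid R}
    (hchain : ∀ i, GradedChainTorsion S i) {K : ℕ} (hK : primeRadical R ^ K = ⊥)
    {Q : Type*} [Ring Q] (φ : R →+* Q) (hunit : ∀ s ∈ S, IsUnit (φ s))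
    (hden : ∀ q, ∃ s ∈ S, ∃ r, φ s * q = φ r) : IsArtinianRing Q := by
  rw [isArtinianRing_iff, ← monotone_stabilizes_iff_artinian]
  intro f
  let F : ℕ → Ideal Q := fun k => OrderDual.ofDual (f k)
  have hF : Antitone F := fun i j hij => f.monotone hij
  choose N hN using fun i => hchain i (fun k => (F k).comap φ)
    (fun i j hij => Ideal.comap_mono (hF hij))
  have hstep : ∀ k, (Finset.range K).sup N ≤ k → F k ≤ F (k + 1) := by
    intro k hk
    have key : ∀ j i, i + j = K → ∀ x ∈ (F k).comap φ, x ∈ primeRadical R ^ i →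
        ∃ s ∈ S, s * x ∈ (F (k + 1)).comap φ := by
      intro j
      induction j with
      | zero =>
        rintro i rfl x - hx
        rw [add_zero] at hK
        rw [hK, Ideal.mem_bot] at hx
        exact ⟨1, S.one_mem, by simp [hx]⟩
      | succ j ih =>
        intro i hi x hxD hx
        obtain ⟨s, hs, y, hyD, hy, hmem⟩ := hN i k
          ((Finset.le_sup (Finset.mem_range.mpr (by omega))).trans hk) x hxD hx
        obtain ⟨t, ht, htm⟩ := ih (i + 1) (by omega) (s * x - y)
          (sub_mem (Ideal.mul_mem_left _ _ hxD)
            (Ideal.comap_mono (hF (Nat.le_succ k)) hyD)) hmem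
        refine ⟨t * s, S.mul_mem ht hs, ?_⟩
        have := add_mem htm (Ideal.mul_mem_left _ t hyD)
        rwa [mul_sub, sub_add_cancel, ← mul_assoc] at this
    intro q hq
    obtain ⟨s, hs, r, hr⟩ := hden q
    obtain ⟨t, ht, htr⟩ := key K 0 (zero_add K) r
      (by rw [Ideal.mem_comap, ← hr]; exact Ideal.mul_mem_left _ _ hq)
      (by simp [Submodule.pow_zero, Ideal.one_eq_top])
    rw [Ideal.mem_comap, map_mul, ← hr] at htr
    exact Ideal.mem_of_isUnit_mul_mem _ (hunit s hs)
      (Ideal.mem_of_isUnit_mul_mem _ (hunit t ht) htr)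
  refine ⟨(Finset.range K).sup N, fun m hm => ?_⟩
  induction m, hm using Nat.le_induction with
  | base => rfl
  | succ m hm ih =>
    rw [ih]
    exact le_antisymm (f.monotone (Nat.le_succ m)) (hstep m hm)

/-- The chain and cancellation conditions on the layers of the prime radical filtration, for a
submonoid of regular elements, produce a left Artinian left quotient ring. -/
theorem hasArtinianLeftQuot_of_graded {S : Submonoid R} (hreg : ∀ s ∈ S, IsRegElem s)
    (hnil : IsNilpotentIdeal (primeRadical R)) (hchain : ∀ i, GradedChainTorsion S i)
    (hcancel : ∀ i, GradedRightCancel S i) : HasArtinianLeftQuot R := by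
  obtain ⟨K, hK⟩ := hnil
  obtain ⟨Q, _, φ, hinj, hunit, hden⟩ := exists_ring_of_left_fractions S hreg fun s hs a => by
    obtain ⟨t, ht, b, hb⟩ := exists_mul_sub_mul_mem_primeRadical_pow (i := K + 1)
      (fun j _ => hchain j) (fun j _ => hcancel j) s hs a
    rw [hK, Ideal.mem_bot] at hb
    exact ⟨t, ht, b, sub_eq_zero.mp hb⟩
  have hart := isArtinianRing_of_gradedChainTorsion hchain hK φ hunit hden
  refine ⟨⟨Q, φ, hinj, fun c hc => isUnit_of_forall_mul_eq_zero fun q hq => ?_, fun q => ?_⟩, hart⟩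
  · obtain ⟨s, hs, r, hr⟩ := hden q
    have : r * c = 0 := hinj (by rw [map_mul, ← hr, mul_assoc, hq, mul_zero, map_zero])
    rw [hc.2 r this, map_zero] at hr
    exact (hunit s hs).mul_right_eq_zero.mp hr
  · obtain ⟨s, hs, r, hr⟩ := hden q
    exact ⟨s, r, hreg s hs, hr⟩

end Sufficiency

section GradedPieces

variable {R : Type u} {B : Type v} [Ring R] [Ring B] {π : R →+* B} {S : Submonoid R}

theorem isRegElem_map_of_mem (hS : π '' (S : Set R) = {x : B | IsRegElem x}) {s : R}
    (hs : s ∈ S) : IsRegElem (π s) :=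
  Set.ext_iff.mp hS (π s) |>.mp ⟨s, hs, rfl⟩

theorem exists_mem_sub_mem_primeRadical (hker : RingHom.ker π = primeRadical R)
    (hS : π '' (S : Set R) = {x : B | IsRegElem x}) {c : R} (hc : IsRegElem (π c)) :
    ∃ s ∈ S, s - c ∈ primeRadical R := by
  obtain ⟨s, hs, hsc⟩ := Set.ext_iff.mp hS (π c) |>.mpr hc
  exact ⟨s, hs, by rw [← map_eq_zero_iff_mem_primeRadical hker, map_sub, hsc, sub_self]⟩

theorem grMk_eq_zero {i : ℕ} {x : R} {hx : x ∈ primeRadical R ^ i} :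
    grMk i x hx = 0 ↔ x ∈ primeRadical R ^ (i + 1) := by
  simp [grMk, Submodule.Quotient.mk_eq_zero]

theorem smul_grMk {i : ℕ} {x : R} (hx : x ∈ primeRadical R ^ i) (a : R) :
    a • grMk i x hx = grMk i (a * x) (Ideal.mul_mem_left _ a hx) := rfl

theorem exists_grMk_eq {i : ℕ} (z : grPiece R i) : ∃ x hx, grMk i x hx = z := by
  obtain ⟨⟨x, hx⟩, rfl⟩ := Submodule.Quotient.mk_surjective _ z
  exact ⟨x, hx, rfl⟩

theorem smul_grPiece_eq_zero {i : ℕ} {a : R} (ha : a ∈ primeRadical R) (z : grPiece R i) :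
    a • z = 0 := by
  obtain ⟨x, hx, rfl⟩ := exists_grMk_eq z
  rw [smul_grMk, grMk_eq_zero, Ideal.IsTwoSided.pow_succ]
  exact Ideal.mul_mem_mul ha hx

/-- If `S` lifts the regular elements modulo the prime radical and satisfies the left Ore
condition modulo the prime radical, then the torsion submodule is the `S`-torsion. -/
theorem mem_tauSub_iff (hker : RingHom.ker π = primeRadical R)
    (hS : π '' (S : Set R) = {x : B | IsRegElem x})
    (hore : ∀ s ∈ S, ∀ a : R, ∃ t ∈ S, ∃ b, t * a - b * s ∈ primeRadical R) {i : ℕ}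
    {z : grPiece R i} : z ∈ tauSub π i ↔ ∃ s ∈ S, s • z = 0 := by
  refine ⟨fun hz => ?_, fun ⟨s, hs, hz⟩ =>
    Submodule.subset_span ⟨s, isRegElem_map_of_mem hS hs, hz⟩⟩
  have key : ∀ {a b s : R} {w : grPiece R i}, a - b * s ∈ primeRadical R → s • w = 0 →
      a • w = 0 := by
    intro a b s w h hw
    have := smul_grPiece_eq_zero h w
    rwa [sub_smul, mul_smul, hw, smul_zero, sub_zero] at this
  induction hz using Submodule.span_induction with
  | mem w hw =>
    obtain ⟨c, hc, hcw⟩ := hw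
    obtain ⟨s, hs, hsc⟩ := exists_mem_sub_mem_primeRadical hker hS hc
    exact ⟨s, hs, key (b := 1) (by rwa [one_mul]) hcw⟩
  | zero => exact ⟨1, S.one_mem, smul_zero _⟩
  | add z w _ _ hz hw =>
    obtain ⟨s, hs, hsz⟩ := hz
    obtain ⟨t, ht, htw⟩ := hw
    obtain ⟨t', ht', b, hb⟩ := hore t ht s
    exact ⟨t' * s, S.mul_mem ht' hs, by
      rw [smul_add, key hb htw, mul_smul, hsz, smul_zero, add_zero]⟩
  | smul a w _ hw =>
    obtain ⟨s, hs, hsw⟩ := hw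
    obtain ⟨t, ht, b, hb⟩ := hore s hs a
    exact ⟨t, ht, by rw [← mul_smul, key hb hsw]⟩

theorem fMk_eq_zero_iff_mem_tauSub {i : ℕ} {x : R} {hx : x ∈ primeRadical R ^ i} :
    fMk π i x hx = 0 ↔ grMk i x hx ∈ tauSub π i :=
  Submodule.Quotient.mk_eq_zero _

theorem fMk_eq_zero_iff_exists_mem (hker : RingHom.ker π = primeRadical R)
    (hS : π '' (S : Set R) = {x : B | IsRegElem x})
    (hore : ∀ s ∈ S, ∀ a : R, ∃ t ∈ S, ∃ b, t * a - b * s ∈ primeRadical R) {i : ℕ}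
    {x : R} {hx : x ∈ primeRadical R ^ i} :
    fMk π i x hx = 0 ↔ ∃ s ∈ S, s * x ∈ primeRadical R ^ (i + 1) := by
  simp_rw [fMk_eq_zero_iff_mem_tauSub, mem_tauSub_iff hker hS hore, smul_grMk, grMk_eq_zero]

/-- The projection `n^i → f_i`. -/
def fProj (π : R →+* B) (i : ℕ) : ↥(primeRadical R ^ i) →ₗ[R] fMod π i :=
  (tauSub π i).mkQ ∘ₗ Submodule.mkQ _

theorem fProj_apply (i : ℕ) (x : ↥(primeRadical R ^ i)) : fProj π i x = fMk π i x x.2 := rfl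

theorem smul_fMod_eq_zero {i : ℕ} {a : R} (ha : a ∈ primeRadical R) (z : fMod π i) :
    a • z = 0 := by
  obtain ⟨z, rfl⟩ := Submodule.Quotient.mk_surjective _ z
  rw [← Submodule.Quotient.mk_smul, smul_grPiece_eq_zero ha, Submodule.Quotient.mk_zero]

theorem gradedChainTorsion_zero (hsurj : Function.Surjective π)
    (hker : RingHom.ker π = primeRadical R) (hS : π '' (S : Set R) = {x : B | IsRegElem x})
    (hG : IsLeftGoldie B) : GradedChainTorsion S 0 := by
  intro D hD
  obtain ⟨N, hN⟩ := hG.2.exists_forall_isRegElem_smul_mem (π := RingHom.id B)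
    Function.surjective_id hG (isSemiprimeNC_of_ker_eq_primeRadical hsurj hker)
    (by rintro a rfl m; exact zero_smul _ m) (D := fun k => Ideal.map π (D k))
    (fun i j hij => Ideal.map_mono (hD hij))
  refine ⟨N, fun k hk x hx hx0 => ?_⟩
  obtain ⟨c, hc, hcx⟩ := hN k hk (π x) (Ideal.mem_map_of_mem π hx)
  obtain ⟨s, hs, rfl⟩ := Set.ext_iff.mp hS c |>.mpr hc
  obtain ⟨y, hy, hyx⟩ := (Ideal.mem_map_iff_of_surjective π hsurj).mp hcx
  refine ⟨s, hs, y, hy, by simp [Submodule.pow_zero, Ideal.one_eq_top], ?_⟩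
  rw [zero_add, Submodule.pow_one, ← map_eq_zero_iff_mem_primeRadical hker, map_sub, hyx, map_mul,
    smul_eq_mul, sub_self]

theorem gradedRightCancel_zero (hker : RingHom.ker π = primeRadical R)
    (hS : π '' (S : Set R) = {x : B | IsRegElem x}) : GradedRightCancel S 0 := by
  rintro s hs x - ⟨t, ht, hx⟩
  rw [zero_add, Submodule.pow_one, ← map_eq_zero_iff_mem_primeRadical hker, map_mul, map_mul] at hx
  refine ⟨1, S.one_mem, ?_⟩
  rw [zero_add, Submodule.pow_one, one_mul, ← map_eq_zero_iff_mem_primeRadical hker]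
  exact (isRegElem_map_of_mem hS hs).2 _ ((isRegElem_map_of_mem hS ht).1 _ hx)

theorem gradedChainTorsion_of_noInfiniteIndepFamily (hsurj : Function.Surjective π)
    (hker : RingHom.ker π = primeRadical R) (hS : π '' (S : Set R) = {x : B | IsRegElem x})
    (hore : ∀ s ∈ S, ∀ a : R, ∃ t ∈ S, ∃ b, t * a - b * s ∈ primeRadical R)
    (hG : IsLeftGoldie B) {i : ℕ}
    (h : NoInfiniteIndepFamily R (fMod π i)) : GradedChainTorsion S i := by
  intro D hD
  obtain ⟨N, hN⟩ := h.exists_forall_isRegElem_smul_mem hsurj hG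
    (isSemiprimeNC_of_ker_eq_primeRadical hsurj hker)
    (fun a ha => smul_fMod_eq_zero ((map_eq_zero_iff_mem_primeRadical hker).mp ha))
    (D := fun k =>
      Submodule.map (fProj π i) (Submodule.comap (primeRadical R ^ i).subtype (D k)))
    (fun i j hij => Submodule.map_mono (Submodule.comap_mono (hD hij)))
  refine ⟨N, fun k hk x hx hxi => ?_⟩
  obtain ⟨c, hc, ⟨y, hyi⟩, hy, hyx⟩ := hN k hk (fProj π i ⟨x, hxi⟩)
    (Submodule.mem_map_of_mem hx)
  obtain ⟨s, hs, hsc⟩ := exists_mem_sub_mem_primeRadical hker hS hc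
  have hsx : s • fProj π i ⟨x, hxi⟩ = c • fProj π i ⟨x, hxi⟩ := by
    rw [← sub_eq_zero, ← sub_smul, smul_fMod_eq_zero hsc]
  rw [← hsx, eq_comm, ← map_smul, ← sub_eq_zero, ← map_sub, fProj_apply,
    fMk_eq_zero_iff_exists_mem hker hS hore] at hyx
  obtain ⟨t, ht, htm⟩ := hyx
  refine ⟨t * s, S.mul_mem ht hs, t * y, Ideal.mul_mem_left _ _ hy, Ideal.mul_mem_left _ _ hyi, ?_⟩
  rwa [mul_assoc, ← mul_sub]

theorem gradedRightCancel_of_fMk (hker : RingHom.ker π = primeRadical R)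
    (hS : π '' (S : Set R) = {x : B | IsRegElem x})
    (hore : ∀ s ∈ S, ∀ a : R, ∃ t ∈ S, ∃ b, t * a - b * s ∈ primeRadical R) {i : ℕ}
    (h : ∀ c : R, IsRegElem (π c) →
      ∀ (x : R) (hx : x ∈ primeRadical R ^ i) (hxc : x * c ∈ primeRadical R ^ i),
        fMk π i (x * c) hxc = 0 → fMk π i x hx = 0) : GradedRightCancel S i := fun s hs x hx hxs =>
  (fMk_eq_zero_iff_exists_mem hker hS hore).mp <| h s (isRegElem_map_of_mem hS hs) x hx
    (Ideal.mul_mem_right _ _ hx) <| (fMk_eq_zero_iff_exists_mem hker hS hore).mpr hxs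

theorem gradedChainTorsion_of_eq_bot {i : ℕ} (h : primeRadical R ^ i = ⊥) :
    GradedChainTorsion S i := by
  refine fun D _ => ⟨0, fun k _ x _ hx => ⟨1, S.one_mem, 0, zero_mem _, zero_mem _, ?_⟩⟩
  rw [h, Ideal.mem_bot] at hx
  simp [hx]

theorem gradedRightCancel_of_eq_bot {i : ℕ} (h : primeRadical R ^ i = ⊥) :
    GradedRightCancel S i := by
  refine fun s _ x hx _ => ⟨1, S.one_mem, ?_⟩
  rw [h, Ideal.mem_bot] at hx
  simp [hx]

theorem hasArtinianLeftQuot_of_lifted_submonoid (hsurj : Function.Surjective π)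
    (hker : RingHom.ker π = primeRadical R) (hG : IsLeftGoldie B)
    (hnil : IsNilpotentIdeal (primeRadical R)) (hreg : (S : Set R) ⊆ regSet R)
    (hS : π '' (S : Set R) = {x : B | IsRegElem x})
    (hd : ∀ i : ℕ, 1 ≤ i → primeRadical R ^ i ≠ ⊥ → NoInfiniteIndepFamily R (fMod π i))
    (he : ∀ i : ℕ, 1 ≤ i → primeRadical R ^ i ≠ ⊥ → ∀ c : R, IsRegElem (π c) →
      ∀ (x : R) (hx : x ∈ primeRadical R ^ i) (hxc : x * c ∈ primeRadical R ^ i),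
        fMk π i (x * c) hxc = 0 → fMk π i x hx = 0) : HasArtinianLeftQuot R := by
  have hchain := gradedChainTorsion_zero hsurj hker hS hG
  have hcancel := gradedRightCancel_zero hker hS
  have hore : ∀ s ∈ S, ∀ a : R, ∃ t ∈ S, ∃ b, t * a - b * s ∈ primeRadical R := by
    simpa only [Submodule.pow_one] using exists_mul_sub_mul_mem_primeRadical_pow (i := 1)
      (fun j hj => by rwa [Nat.lt_one_iff.mp hj]) (fun j hj => by rwa [Nat.lt_one_iff.mp hj])
  refine hasArtinianLeftQuot_of_graded hreg hnil (fun i => ?_) fun i => ?_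
  · rcases Nat.eq_zero_or_pos i with rfl | hi
    · exact hchain
    by_cases h0 : primeRadical R ^ i = ⊥
    · exact gradedChainTorsion_of_eq_bot h0
    · exact gradedChainTorsion_of_noInfiniteIndepFamily hsurj hker hS hore hG (hd i hi h0)
  · rcases Nat.eq_zero_or_pos i with rfl | hi
    · exact hcancel
    by_cases h0 : primeRadical R ^ i = ⊥
    · exact gradedRightCancel_of_eq_bot h0
    · exact gradedRightCancel_of_fMk hker hS hore (he i hi h0)

end GradedPieces

section NilpotentIdeals

variable {R : Type*} [Ring R]

theorem Ideal.IsPrimeNC.le_of_pow_le {I P : Ideal R} [I.IsTwoSided] (hP : P.IsPrimeNC) {k : ℕ}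
    (h : I ^ k ≤ P) : I ≤ P := by
  induction k with
  | zero =>
    rw [Submodule.pow_zero, Ideal.one_eq_top, top_le_iff] at h
    exact absurd h hP.1
  | succ k ih =>
    rw [Ideal.IsTwoSided.pow_succ] at h
    intro a ha
    by_contra haP
    refine haP (ih (fun b hb => (hP.2.2 a b fun r => h ?_).resolve_left haP) ha)
    exact Ideal.mul_mem_mul (Ideal.mul_mem_right _ _ ha) hb

theorem Ideal.le_primeRadical_of_pow_eq_bot {I : Ideal R} [I.IsTwoSided] {k : ℕ}
    (h : I ^ k = ⊥) : I ≤ primeRadical R :=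
  le_sInf fun _ hP => Ideal.IsPrimeNC.le_of_pow_le hP (h.trans_le bot_le)

/-- The largest two-sided ideal contained in a maximal left ideal is prime. -/
theorem primeRadical_le_of_isMaximal {m : Ideal R} (hm : m.IsMaximal) : primeRadical R ≤ m := by
  let P : Ideal R :=
    { carrier := {a | ∀ r, a * r ∈ m}
      add_mem' := fun ha hb r => by rw [add_mul]; exact add_mem (ha r) (hb r)
      zero_mem' := fun r => by rw [zero_mul]; exact zero_mem m
      smul_mem' := fun c a ha r => by
        rw [smul_eq_mul, mul_assoc]; exact m.mul_mem_left c (ha r) }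
  have hPm : P ≤ m := fun a ha => by simpa using ha 1
  refine (sInf_le ?_ : primeRadical R ≤ P).trans hPm
  refine ⟨fun h => hm.ne_top (top_le_iff.mp (h ▸ hPm)), fun a ha r t => ?_, fun a b hab => ?_⟩
  · rw [mul_assoc]
    exact ha (r * t)
  · refine or_iff_not_imp_right.mpr fun hb r => ?_
    obtain ⟨t, ht⟩ : ∃ t, b * t ∉ m := by
      by_contra! h
      exact hb h
    obtain ⟨x, y, hy, hxy⟩ := hm.exists_inv ht
    have : a * r = a * (r * x) * b * t + a * r * y := by
      calc a * r = a * r * (x * (b * t) + y) := by rw [hxy, mul_one]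
        _ = _ := by noncomm_ring
    rw [this]
    exact add_mem (hab _ t) (m.mul_mem_left _ hy)

theorem exists_primeRadical_pow_eq_bot (R : Type*) [Ring R] [IsArtinianRing R] :
    ∃ k, primeRadical R ^ k = ⊥ := by
  obtain ⟨k, hk⟩ := IsSemiprimaryRing.isNilpotent (R := R)
  refine ⟨k, le_bot_iff.mp (le_trans ?_ hk.le)⟩
  refine Ideal.pow_right_mono ?_ k
  rw [Ring.jacobson_eq_sInf_isMaximal]
  exact le_sInf fun m hm => primeRadical_le_of_isMaximal hm

theorem isNilpotentIdeal_of_pow_eq_bot {I : Ideal R} {k : ℕ} (h : I ^ k = ⊥) :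
    IsNilpotentIdeal I :=
  ⟨k, by rw [Submodule.pow_succ, h, Ideal.bot_mul]⟩

end NilpotentIdeals

namespace IsLeftQuotRing

variable {R : Type*} {Q : Type*} [Ring R] [Ring Q] {φ : R →+* Q}

theorem isRegElem_iff (h : IsLeftQuotRing φ) {c : R} : IsRegElem c ↔ IsUnit (φ c) := by
  refine ⟨h.isUnit c, fun hc => ⟨fun x hx => h.inj ?_, fun x hx => h.inj ?_⟩⟩
  · rw [map_zero, ← hc.mul_right_eq_zero, ← map_mul, hx, map_zero]
  · rw [map_zero, ← hc.mul_left_eq_zero, ← map_mul, hx, map_zero]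

theorem isRegElem_mul (h : IsLeftQuotRing φ) {c d : R} (hc : IsRegElem c) (hd : IsRegElem d) :
    IsRegElem (c * d) := by
  rw [h.isRegElem_iff] at *
  rw [map_mul]
  exact hc.mul hd

theorem exists_mul_eq_mul (h : IsLeftQuotRing φ) {c : R} (hc : IsRegElem c) (p : Q) :
    ∃ e r, IsRegElem e ∧ φ e * p = φ r * φ c := by
  obtain ⟨u, hu⟩ := h.isUnit c hc
  obtain ⟨e, r, he, her⟩ := h.denom (p * ↑u⁻¹)
  exact ⟨e, r, he, by rw [← her, ← hu, mul_assoc, Units.inv_mul_cancel_right]⟩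

theorem mem_map_iff (h : IsLeftQuotRing φ) {K : Ideal R} {q : Q} :
    q ∈ K.map φ ↔ ∃ c a, IsRegElem c ∧ a ∈ K ∧ φ c * q = φ a := by
  refine ⟨fun hq => ?_, fun ⟨c, a, hc, ha, hq⟩ =>
    Ideal.mem_of_isUnit_mul_mem _ (h.isUnit c hc) (hq ▸ Ideal.mem_map_of_mem φ ha)⟩
  induction hq using Submodule.span_induction with
  | mem q hq =>
    obtain ⟨a, ha, rfl⟩ := hq
    exact ⟨1, a, h.isRegElem_iff.mpr (by simp), ha, by simp⟩
  | zero => exact ⟨1, 0, h.isRegElem_iff.mpr (by simp), zero_mem K, by simp⟩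
  | add q w _ _ hq hw =>
    obtain ⟨c, a, hc, ha, hq⟩ := hq
    obtain ⟨d, b, hd, hb, hw⟩ := hw
    obtain ⟨e, r, he, her⟩ := h.exists_mul_eq_mul hd (φ c)
    refine ⟨e * c, e * a + r * b, h.isRegElem_mul he hc,
      add_mem (K.mul_mem_left _ ha) (K.mul_mem_left _ hb), ?_⟩
    rw [map_add, map_mul, map_mul, map_mul, ← hq, ← hw, mul_add, ← mul_assoc, ← mul_assoc, ← her]
  | smul p q _ hq =>
    obtain ⟨c, a, hc, ha, hq⟩ := hq
    obtain ⟨e, r, he, her⟩ := h.exists_mul_eq_mul hc p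
    refine ⟨e, r * a, he, K.mul_mem_left _ ha, ?_⟩
    rw [smul_eq_mul, ← mul_assoc, her, mul_assoc, hq, map_mul]

theorem isTwoSided_map [IsNoetherianRing Q] (h : IsLeftQuotRing φ) (K : Ideal R) [K.IsTwoSided] :
    (K.map φ).IsTwoSided := by
  have hmul : ∀ q ∈ K.map φ, ∀ r, q * φ r ∈ K.map φ := fun q hq r => by
    obtain ⟨c, a, hc, ha, hq⟩ := h.mem_map_iff.mp hq
    exact h.mem_map_iff.mpr ⟨c, a * r, hc, Ideal.mul_mem_right _ _ ha, by
      rw [← mul_assoc, hq, map_mul]⟩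
  refine ⟨fun {q} p hq => ?_⟩
  obtain ⟨e, r, he, her⟩ := h.denom p
  obtain ⟨u, hu⟩ := h.isUnit e he
  let F : ℕ →o Ideal Q :=
    { toFun := fun k => Submodule.comap (LinearMap.toSpanSingleton Q Q (φ e ^ k)) (K.map φ)
      monotone' := monotone_nat_of_le_succ fun k x hx => by
        rw [Submodule.mem_comap, LinearMap.toSpanSingleton_apply, smul_eq_mul] at hx ⊢
        rw [_root_.pow_succ, ← mul_assoc]
        exact hmul _ hx e }
  have hF : ∀ k x, x ∈ F k ↔ x * φ e ^ k ∈ K.map φ := fun k x => Iff.rfl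
  obtain ⟨N, hN⟩ := monotone_stabilizes_iff_noetherian.mpr ‹IsNoetherianRing Q› F
  have hmem : q * ↑(u⁻¹ ^ (N + 1)) ∈ F N := by
    rwa [hN (N + 1) (Nat.le_succ N), hF, ← hu, mul_assoc, ← Units.val_pow_eq_pow_val, ← Units.val_mul,
      inv_pow, inv_mul_cancel, Units.val_one, mul_one]
  rw [hF, ← hu, mul_assoc, ← Units.val_pow_eq_pow_val, ← Units.val_mul, _root_.pow_succ',
    mul_assoc, inv_pow, inv_mul_cancel, mul_one] at hmem
  have hp : p = ↑u⁻¹ * φ r := by rw [← her, ← hu, Units.inv_mul_cancel_left]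
  rw [hp, ← mul_assoc]
  exact hmul _ hmem r

theorem map_mul [IsNoetherianRing Q] (h : IsLeftQuotRing φ) (I J : Ideal R) [I.IsTwoSided] :
    (I * J).map φ = I.map φ * J.map φ := by
  have := h.isTwoSided_map I
  refine le_antisymm (Ideal.map_le_iff_le_comap.mpr (Ideal.mul_le.mpr fun a ha b hb => ?_))
    (Ideal.mul_le.mpr fun q hq w hw => ?_)
  · rw [Ideal.mem_comap, _root_.map_mul]
    exact Ideal.mul_mem_mul (Ideal.mem_map_of_mem φ ha) (Ideal.mem_map_of_mem φ hb)
  · obtain ⟨c, b, hc, hb, hw⟩ := h.mem_map_iff.mp hw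
    obtain ⟨u, hu⟩ := h.isUnit c hc
    obtain ⟨e, a, he, ha, hq⟩ := h.mem_map_iff.mp (Ideal.mul_mem_right (↑u⁻¹ : Q) _ hq)
    refine h.mem_map_iff.mpr ⟨e, a * b, he, Ideal.mul_mem_mul ha hb, ?_⟩
    rw [_root_.map_mul, ← hq, ← hw, ← hu, mul_assoc, mul_assoc, Units.inv_mul_cancel_left]

theorem map_pow [IsNoetherianRing Q] (h : IsLeftQuotRing φ) (I : Ideal R) [I.IsTwoSided] (k : ℕ) :
    (I ^ k).map φ = I.map φ ^ k := by
  induction k with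
  | zero => rw [Submodule.pow_zero, Submodule.pow_zero, Ideal.one_eq_top, Ideal.map_top,
      Ideal.one_eq_top]
  | succ k ih => rw [Submodule.pow_succ, Submodule.pow_succ, h.map_mul, ih]

theorem isPrimeNC_comap [IsNoetherianRing Q] (h : IsLeftQuotRing φ) {P : Ideal Q}
    (hP : P.IsPrimeNC) : (P.comap φ).IsPrimeNC := by
  refine ⟨fun h1 => hP.1 ?_, fun a ha r => ?_, fun a b hab => hP.2.2 _ _ fun q => ?_⟩
  · rw [Ideal.eq_top_iff_one] at h1 ⊢
    simpa using h1
  · rw [Ideal.mem_comap, _root_.map_mul]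
    exact hP.2.1 _ ha _
  · let I : Ideal R :=
      { carrier := {x | ∀ r, φ (x * r * b) ∈ P}
        add_mem' := fun ha hb r => by
          rw [add_mul, add_mul, map_add]; exact add_mem (ha r) (hb r)
        zero_mem' := fun r => by rw [zero_mul, zero_mul, map_zero]; exact zero_mem P
        smul_mem' := fun c a ha r => by
          rw [smul_eq_mul, mul_assoc, mul_assoc, _root_.map_mul, ← mul_assoc a]
          exact P.mul_mem_left _ (ha r) }
    have : I.IsTwoSided := ⟨fun {x} y hx r => by rw [mul_assoc x]; exact hx (y * r)⟩
    have := h.isTwoSided_map I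
    have ha : a ∈ I := hab
    obtain ⟨c, r, hc, hq⟩ := h.denom q
    obtain ⟨u, hu⟩ := h.isUnit c hc
    obtain ⟨e, x, he, hx, hex⟩ := h.mem_map_iff.mp
      (Ideal.mul_mem_right (↑u⁻¹ : Q) _ (Ideal.mem_map_of_mem φ ha))
    refine Ideal.mem_of_isUnit_mul_mem P (h.isUnit e he) ?_
    have hq' : q = ↑u⁻¹ * φ r := by rw [← hq, ← hu, Units.inv_mul_cancel_left]
    have := hx r
    rwa [_root_.map_mul, _root_.map_mul, ← hex, mul_assoc (φ e), mul_assoc (φ a), ← hq',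
      mul_assoc (φ e)] at this

theorem comap_primeRadical [IsArtinianRing Q] (h : IsLeftQuotRing φ) :
    (primeRadical Q).comap φ = primeRadical R := by
  refine le_antisymm ?_ ?_
  · obtain ⟨k, hk⟩ := exists_primeRadical_pow_eq_bot Q
    have : ((primeRadical Q).comap φ).IsTwoSided := inferInstance
    refine Ideal.le_primeRadical_of_pow_eq_bot (k := k) (le_bot_iff.mp ?_)
    have hle : ∀ k, (primeRadical Q).comap φ ^ k ≤ (primeRadical Q ^ k).comap φ := by
      intro k
      induction k with
      | zero => simp [Submodule.pow_zero, Ideal.one_eq_top]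
      | succ k ih =>
        rw [Submodule.pow_succ, Submodule.pow_succ, Ideal.mul_le]
        intro a ha b hb
        rw [Ideal.mem_comap, _root_.map_mul]
        exact Ideal.mul_mem_mul (ih ha) hb
    refine (hle k).trans fun x hx => ?_
    rw [hk, Ideal.mem_comap, Ideal.mem_bot] at hx
    exact h.inj (by rw [hx, map_zero])
  · intro x hx
    refine Submodule.mem_sInf.mpr fun P hP => ?_
    exact Submodule.mem_sInf.mp hx _ (h.isPrimeNC_comap hP)

theorem map_mem_primeRadical [IsArtinianRing Q] (h : IsLeftQuotRing φ) {r : R} :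
    φ r ∈ primeRadical Q ↔ r ∈ primeRadical R := by
  rw [← h.comap_primeRadical, Ideal.mem_comap]

theorem map_primeRadical [IsArtinianRing Q] (h : IsLeftQuotRing φ) :
    (primeRadical R).map φ = primeRadical Q := by
  refine le_antisymm ?_ fun q hq => ?_
  · rw [Ideal.map_le_iff_le_comap, h.comap_primeRadical]
  · obtain ⟨c, r, hc, hr⟩ := h.denom q
    exact h.mem_map_iff.mpr ⟨c, r, hc, h.map_mem_primeRadical.mp
      (hr ▸ Ideal.mul_mem_left _ _ hq), hr⟩

theorem map_primeRadical_pow [IsArtinianRing Q] (h : IsLeftQuotRing φ) (k : ℕ) :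
    (primeRadical R ^ k).map φ = primeRadical Q ^ k := by
  rw [h.map_pow, h.map_primeRadical]

theorem primeRadical_pow_eq_bot_iff [IsArtinianRing Q] (h : IsLeftQuotRing φ) (k : ℕ) :
    primeRadical Q ^ k = ⊥ ↔ primeRadical R ^ k = ⊥ := by
  rw [← h.map_primeRadical_pow, Ideal.map_eq_bot_iff_of_injective h.inj]

theorem map_mem_primeRadical_pow [IsArtinianRing Q] (h : IsLeftQuotRing φ) {k : ℕ} {r : R} :
    φ r ∈ primeRadical Q ^ k ↔ ∃ c, IsRegElem c ∧ c * r ∈ primeRadical R ^ k := by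
  rw [← h.map_primeRadical_pow, h.mem_map_iff]
  constructor
  · rintro ⟨c, a, hc, ha, hca⟩
    rw [← _root_.map_mul] at hca
    exact ⟨c, hc, h.inj hca ▸ ha⟩
  · rintro ⟨c, hc, hcr⟩
    exact ⟨c, c * r, hc, hcr, (_root_.map_mul φ c r).symm⟩

/-- Torsion-free quotients of left ideals of a ring with left Noetherian left quotient ring have
finite uniform dimension. -/
theorem noInfiniteIndepFamily [IsNoetherianRing Q] (h : IsLeftQuotRing φ) {M : Type*}
    [AddCommGroup M] [Module R M] {K : Ideal R} {f : K →ₗ[R] M} (hf : Function.Surjective f)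
    (htf : ∀ c : R, IsRegElem c → ∀ m : M, c • m = 0 → m = 0) : NoInfiniteIndepFamily R M := by
  rintro ⟨L, hL, hind⟩
  let D : ℕ → Submodule R M := fun k => ⨆ j < k, L j
  let F : ℕ →o Ideal Q :=
    { toFun := fun k => Ideal.map φ (Submodule.map K.subtype (Submodule.comap f (D k)))
      monotone' := fun i j hij => Ideal.map_mono (Submodule.map_mono (Submodule.comap_mono
        (biSup_mono fun _ hk => hk.trans_le hij))) }
  obtain ⟨N, hN⟩ := monotone_stabilizes_iff_noetherian.mpr ‹IsNoetherianRing Q› F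
  obtain ⟨z, hz, hz0⟩ := (Submodule.ne_bot_iff _).mp (hL N)
  obtain ⟨x, rfl⟩ := hf z
  have hx : φ x ∈ F (N + 1) :=
    Ideal.mem_map_of_mem φ ⟨x, le_iSup₂_of_le (f := fun j (_ : j < N + 1) => L j) N
      N.lt_succ_self le_rfl hz, rfl⟩
  rw [← hN (N + 1) N.le_succ] at hx
  obtain ⟨c, _, hc, ⟨y, hy, rfl⟩, hcy⟩ := h.mem_map_iff.mp hx
  rw [← _root_.map_mul] at hcy
  have hcy : c • x = y := Subtype.ext (h.inj hcy)
  refine hz0 (htf c hc _ ?_)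
  have hle : D N ≤ ⨆ j ≠ N, L j := biSup_mono fun j hj => hj.ne
  exact Submodule.disjoint_def.mp (hind N) _ (Submodule.smul_mem _ _ hz)
    (hle (by rw [← map_smul, hcy]; exact hy))

theorem isLeftGoldie [IsNoetherianRing Q] (h : IsLeftQuotRing φ) : IsLeftGoldie R := by
  refine ⟨fun f hf hmono => ?_, h.noInfiniteIndepFamily (K := ⊤)
    (f := Submodule.topEquiv.toLinearMap) Submodule.topEquiv.surjective fun c hc => hc.1⟩
  let F : ℕ →o Ideal Q :=
    { toFun := fun i =>
        { carrier := {q | ∀ s, (∀ x ∈ f i, x * s = 0) → q * φ s = 0}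
          add_mem' := fun ha hb s hs => by rw [add_mul, ha s hs, hb s hs, add_zero]
          zero_mem' := fun s _ => zero_mul _
          smul_mem' := fun c a ha s hs => by rw [smul_eq_mul, mul_assoc, ha s hs, mul_zero] }
      monotone' := fun i j hij q hq s hs => hq s fun x hx => hs x (hmono i j hij hx) }
  have hF : ∀ i r, r ∈ f i ↔ φ r ∈ F i := by
    refine fun i r => ⟨fun hr s hs => by rw [← _root_.map_mul, hs r hr, map_zero], fun hr => ?_⟩
    obtain ⟨S, hS⟩ := hf i
    rw [hS]
    intro s hs
    refine h.inj ?_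
    rw [_root_.map_mul, map_zero]
    refine hr s fun x hx => ?_
    rw [hS] at hx
    exact hx s hs
  obtain ⟨N, hN⟩ := monotone_stabilizes_iff_noetherian.mpr ‹IsNoetherianRing Q› F
  exact ⟨N, fun k hk => Set.ext fun r => by rw [hF, hF, hN k hk]⟩

end IsLeftQuotRing

/-- Units lift modulo the prime radical of a left Artinian ring. -/
theorem isUnit_of_isUnit_map_of_ker_eq_primeRadical {Q E : Type*} [Ring Q] [Ring E]
    [IsArtinianRing Q] {θ : Q →+* E} (hθsurj : Function.Surjective θ)
    (hθker : RingHom.ker θ = primeRadical Q) {q : Q} (hq : IsUnit (θ q)) : IsUnit q := by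
  obtain ⟨k, hk⟩ := exists_primeRadical_pow_eq_bot Q
  obtain ⟨w, hw⟩ := hq.exists_right_inv
  obtain ⟨p, rfl⟩ := hθsurj w
  have hmem : q * p - 1 ∈ primeRadical Q := by
    rw [← map_eq_zero_iff_mem_primeRadical hθker, map_sub, map_mul, hw, map_one, sub_self]
  have hunit : IsUnit (q * p) := by
    have : IsNilpotent (q * p - 1) := ⟨k, by
      have := Ideal.pow_mem_pow hmem k
      rwa [hk, Ideal.mem_bot] at this⟩
    simpa using this.isUnit_one_add
  exact isUnit_of_forall_mul_eq_zero fun x hx =>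
    hunit.mul_left_eq_zero.mp (by rw [← mul_assoc, hx, zero_mul])

namespace IsLeftQuotRing

section Reduction

variable {R : Type*} {B : Type*} {Q : Type*} {E : Type*} [Ring R] [Ring B] [Ring Q] [Ring E]
  [IsArtinianRing Q] {φ : R →+* Q} {π : R →+* B} {θ : Q →+* E} {ψ : B →+* E}

theorem injective_of_comp_eq (h : IsLeftQuotRing φ) (hsurj : Function.Surjective π)
    (hker : RingHom.ker π = primeRadical R) (hθker : RingHom.ker θ = primeRadical Q)
    (hcomp : θ.comp φ = ψ.comp π) : Function.Injective ψ := by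
  refine (injective_iff_map_eq_zero ψ).mpr fun b hb => ?_
  obtain ⟨r, rfl⟩ := hsurj b
  rwa [← RingHom.comp_apply, ← hcomp, RingHom.comp_apply,
    map_eq_zero_iff_mem_primeRadical hθker, h.map_mem_primeRadical,
    ← map_eq_zero_iff_mem_primeRadical hker] at hb

theorem isUnit_map_of_comp_eq (h : IsLeftQuotRing φ) (hsurj : Function.Surjective π)
    (hker : RingHom.ker π = primeRadical R) (hθsurj : Function.Surjective θ)
    (hθker : RingHom.ker θ = primeRadical Q) (hcomp : θ.comp φ = ψ.comp π) {b : B}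
    (hb : IsRegElem b) : IsUnit (ψ b) := by
  have := hθsurj.isArtinianRing
  have hinj := h.injective_of_comp_eq hsurj hker hθker hcomp
  have hcomp' : ∀ r, θ (φ r) = ψ (π r) := RingHom.congr_fun hcomp
  refine isUnit_of_forall_mul_eq_zero fun e he => ?_
  obtain ⟨q, rfl⟩ := hθsurj e
  obtain ⟨c, r, hc, hr⟩ := h.denom q
  have hr0 : ψ (π r * b) = 0 := by
    rw [_root_.map_mul, ← hcomp', ← hr, _root_.map_mul, mul_assoc, he, mul_zero]
  refine ((h.isUnit c hc).map θ).mul_right_eq_zero.mp ?_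
  have hr1 : π r = 0 := hb.2 _ (hinj (by rw [hr0, map_zero]))
  rw [← _root_.map_mul, hr, hcomp', hr1, map_zero]

/-- The induced map `R / n → Q / J` is a left quotient ring. -/
theorem of_comp_eq (h : IsLeftQuotRing φ) (hsurj : Function.Surjective π)
    (hker : RingHom.ker π = primeRadical R) (hθsurj : Function.Surjective θ)
    (hθker : RingHom.ker θ = primeRadical Q) (hcomp : θ.comp φ = ψ.comp π) :
    IsLeftQuotRing ψ ∧ ∀ c, IsRegElem (π c) ↔ IsRegElem c := by
  have hinj := h.injective_of_comp_eq hsurj hker hθker hcomp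
  have hunit : ∀ b, IsRegElem b → IsUnit (ψ b) := fun b =>
    h.isUnit_map_of_comp_eq hsurj hker hθsurj hθker hcomp
  have hcomp' : ∀ r, θ (φ r) = ψ (π r) := RingHom.congr_fun hcomp
  have hreg : ∀ c, IsRegElem (π c) ↔ IsRegElem c := fun c => by
    refine ⟨fun hc => h.isRegElem_iff.mpr
      (isUnit_of_isUnit_map_of_ker_eq_primeRadical hθsurj hθker ?_), fun hc => ?_⟩
    · rw [hcomp']
      exact hunit _ hc
    · have hu := (h.isUnit c hc).map θ
      rw [hcomp'] at hu
      refine ⟨fun x hx => hinj ?_, fun x hx => hinj ?_⟩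
      · rw [map_zero, ← hu.mul_right_eq_zero, ← _root_.map_mul, hx, map_zero]
      · rw [map_zero, ← hu.mul_left_eq_zero, ← _root_.map_mul, hx, map_zero]
  refine ⟨⟨hinj, hunit, fun e => ?_⟩, hreg⟩
  obtain ⟨q, rfl⟩ := hθsurj e
  obtain ⟨c, r, hc, hr⟩ := h.denom q
  exact ⟨π c, π r, (hreg c).mpr hc, by rw [← hcomp', ← hcomp', ← hr, _root_.map_mul]⟩

end Reduction

variable {R : Type u} {B : Type v} {Q : Type u} [Ring R] [Ring B] [Ring Q] [IsArtinianRing Q]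
  {φ : R →+* Q} {π : R →+* B}

theorem exists_reduction (h : IsLeftQuotRing φ) (hsurj : Function.Surjective π)
    (hker : RingHom.ker π = primeRadical R) :
    ∃ (E : Type v) (_ : Ring E) (ψ : B →+* E) (θ : Q →+* E), Function.Surjective θ ∧
      RingHom.ker θ = primeRadical Q ∧ θ.comp φ = ψ.comp π ∧ IsLeftQuotRing ψ ∧
      ∀ c, IsRegElem (π c) ↔ IsRegElem c := by
  let θ₀ := Ideal.Quotient.mk (primeRadical Q)
  have hθ₀ : Function.Surjective θ₀ := Ideal.Quotient.mk_surjective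
  have hθ₀ker : RingHom.ker θ₀ = primeRadical Q := Ideal.mk_ker
  let g : {g : R →+* Q ⧸ primeRadical Q // RingHom.ker π ≤ RingHom.ker g} :=
    ⟨θ₀.comp φ, fun r hr => by
      rw [hker] at hr
      rw [RingHom.mem_ker, RingHom.comp_apply, map_eq_zero_iff_mem_primeRadical hθ₀ker]
      exact h.map_mem_primeRadical.mpr hr⟩
  let ψ₀ := π.liftOfSurjective hsurj g
  have hcomp : θ₀.comp φ = ψ₀.comp π := (RingHom.liftOfSurjective_comp π hsurj g).symm
  have hψ₀ := (h.of_comp_eq hsurj hker hθ₀ hθ₀ker hcomp).1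
  have : Small.{v} (Q ⧸ primeRadical Q) := by
    choose c r hc hr using hψ₀.denom
    refine small_of_injective (f := fun q => (c q, r q)) fun p q hpq => ?_
    have h1 : c p = c q := congrArg Prod.fst hpq
    have h2 : r p = r q := congrArg Prod.snd hpq
    refine (hψ₀.isUnit _ (hc p)).mul_left_cancel ?_
    rw [hr p, h1, hr q, h2]
  let e := (Shrink.ringEquiv (Q ⧸ primeRadical Q)).symm
  let θ := (e : _ →+* Shrink.{v} (Q ⧸ primeRadical Q)).comp θ₀
  let ψ := (e : _ →+* Shrink.{v} (Q ⧸ primeRadical Q)).comp ψ₀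
  have hθ : Function.Surjective θ := e.surjective.comp hθ₀
  have hθker : RingHom.ker θ = primeRadical Q := by
    refine Eq.trans ?_ hθ₀ker
    ext q
    simp [θ, RingHom.mem_ker]
  have hcomp : θ.comp φ = ψ.comp π := by
    rw [RingHom.comp_assoc, RingHom.comp_assoc, hcomp]
  exact ⟨_, inferInstance, ψ, θ, hθ, hθker, hcomp, h.of_comp_eq hsurj hker hθ hθker hcomp⟩

/-- The regular elements of a ring with a left quotient ring, as a submonoid. -/
def regSubmonoid (h : IsLeftQuotRing φ) : Submonoid R where
  carrier := regSet R
  mul_mem' := h.isRegElem_mul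
  one_mem' := h.isRegElem_iff.mpr (by rw [map_one]; exact isUnit_one)

theorem image_regSubmonoid (h : IsLeftQuotRing φ) (hsurj : Function.Surjective π)
    (hker : RingHom.ker π = primeRadical R) :
    π '' (h.regSubmonoid : Set R) = {x : B | IsRegElem x} := by
  obtain ⟨-, -, -, -, -, -, -, -, hreg⟩ := h.exists_reduction hsurj hker
  ext b
  constructor
  · rintro ⟨c, hc, rfl⟩
    exact (hreg c).mpr hc
  · intro hb
    obtain ⟨c, rfl⟩ := hsurj b
    exact ⟨c, (hreg c).mp hb, rfl⟩

theorem fMk_eq_zero_iff (h : IsLeftQuotRing φ) (hsurj : Function.Surjective π)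
    (hker : RingHom.ker π = primeRadical R) {i : ℕ} {x : R} {hx : x ∈ primeRadical R ^ i} :
    fMk π i x hx = 0 ↔ φ x ∈ primeRadical Q ^ (i + 1) := by
  rw [fMk_eq_zero_iff_exists_mem hker (h.image_regSubmonoid hsurj hker) fun s hs a => ?_,
    h.map_mem_primeRadical_pow]
  · rfl
  · obtain ⟨t, b, ht, htb⟩ := h.exists_mul_eq_mul hs (φ a)
    rw [← _root_.map_mul, ← _root_.map_mul] at htb
    exact ⟨t, ht, b, by rw [h.inj htb, sub_self]; exact zero_mem _⟩

theorem noInfiniteIndepFamily_fMod (h : IsLeftQuotRing φ) (hsurj : Function.Surjective π)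
    (hker : RingHom.ker π = primeRadical R) (i : ℕ) : NoInfiniteIndepFamily R (fMod π i) := by
  have hf : Function.Surjective (fProj π i) :=
    (Submodule.mkQ_surjective _).comp (Submodule.mkQ_surjective _)
  refine h.noInfiniteIndepFamily hf fun c hc m hm => ?_
  obtain ⟨x, rfl⟩ := hf m
  rw [← map_smul, fProj_apply, h.fMk_eq_zero_iff hsurj hker] at hm
  rw [fProj_apply, h.fMk_eq_zero_iff hsurj hker]
  refine Ideal.mem_of_isUnit_mul_mem _ (h.isUnit c hc) ?_
  rwa [← _root_.map_mul]

theorem fMk_eq_zero_of_mul (h : IsLeftQuotRing φ) (hsurj : Function.Surjective π)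
    (hker : RingHom.ker π = primeRadical R) {i : ℕ} {c x : R} {hx : x ∈ primeRadical R ^ i}
    {hxc : x * c ∈ primeRadical R ^ i} (hc : IsRegElem c) (h0 : fMk π i (x * c) hxc = 0) :
    fMk π i x hx = 0 := by
  rw [h.fMk_eq_zero_iff hsurj hker] at h0 ⊢
  obtain ⟨u, hu⟩ := h.isUnit c hc
  rw [_root_.map_mul, ← hu] at h0
  simpa using Ideal.mul_mem_right (↑u⁻¹ : Q) _ h0

variable {S : Submonoid R}

/-- Denominators can be chosen in any submonoid of regular elements lifting the regular elements
modulo the prime radical. -/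
theorem exists_mem_submonoid (h : IsLeftQuotRing φ) (hsurj : Function.Surjective π)
    (hker : RingHom.ker π = primeRadical R) (hS : π '' (S : Set R) = {x : B | IsRegElem x})
    (q : Q) : ∃ s ∈ S, ∃ r, φ s * q = φ r := by
  obtain ⟨-, -, -, -, -, -, -, -, hreg⟩ := h.exists_reduction hsurj hker
  have key : ∀ k, ∃ s ∈ S, ∃ r, φ s * q - φ r ∈ primeRadical Q ^ k := by
    intro k
    induction k with
    | zero => exact ⟨1, S.one_mem, 0, by simp [Submodule.pow_zero, Ideal.one_eq_top]⟩
    | succ k ih =>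
      obtain ⟨t, ht, r, hr⟩ := ih
      set j := φ t * q - φ r with hj
      have hr' := hr
      rw [← h.map_primeRadical_pow] at hr'
      obtain ⟨c, y, hc, -, hcy⟩ := h.mem_map_iff.mp hr'
      obtain ⟨s, hs, hsc⟩ := exists_mem_sub_mem_primeRadical hker hS ((hreg c).mpr hc)
      refine ⟨s * t, S.mul_mem hs ht, s * r + y, ?_⟩
      have heq : φ (s * t) * q - φ (s * r + y) = φ (s - c) * j := by
        rw [map_sub, sub_mul, hcy, hj, map_add, _root_.map_mul, _root_.map_mul]
        noncomm_ring
      rw [heq, Ideal.IsTwoSided.pow_succ]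
      exact Ideal.mul_mem_mul (h.map_mem_primeRadical.mpr hsc) hr
  obtain ⟨k, hk⟩ := exists_primeRadical_pow_eq_bot Q
  obtain ⟨s, hs, r, hr⟩ := key k
  rw [hk, Ideal.mem_bot] at hr
  exact ⟨s, hs, r, sub_eq_zero.mp hr⟩

theorem isLeftOreSubset (h : IsLeftQuotRing φ) (hsurj : Function.Surjective π)
    (hker : RingHom.ker π = primeRadical R) (hreg : (S : Set R) ⊆ regSet R)
    (hS : π '' (S : Set R) = {x : B | IsRegElem x}) : IsLeftOreSubset (S : Set R) := by
  refine ⟨S.one_mem, fun s hs t ht => S.mul_mem hs ht, fun s hs a => ?_⟩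
  obtain ⟨u, hu⟩ := h.isUnit s (hreg hs)
  obtain ⟨t, ht, b, hb⟩ := h.exists_mem_submonoid hsurj hker hS (φ a * ↑u⁻¹)
  refine ⟨t, ht, b, h.inj ?_⟩
  rw [_root_.map_mul, _root_.map_mul, ← hb, ← hu, mul_assoc, Units.inv_mul_cancel_right]

theorem primeRadical_eq_setOf (h : IsLeftQuotRing φ) (hsurj : Function.Surjective π)
    (hker : RingHom.ker π = primeRadical R) (hreg : (S : Set R) ⊆ regSet R)
    (hS : π '' (S : Set R) = {x : B | IsRegElem x}) :
    (primeRadical Q : Set Q) = {q | ∃ c ∈ S, ∃ a ∈ primeRadical R, φ c * q = φ a} := by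
  ext q
  constructor
  · intro hq
    obtain ⟨s, hs, r, hr⟩ := h.exists_mem_submonoid hsurj hker hS q
    exact ⟨s, hs, r, h.map_mem_primeRadical.mp (hr ▸ Ideal.mul_mem_left _ _ hq), hr⟩
  · rintro ⟨c, hc, a, ha, hq⟩
    exact Ideal.mem_of_isUnit_mul_mem _ (h.isUnit c (hreg hc))
      (hq ▸ h.map_mem_primeRadical.mpr ha)

end IsLeftQuotRing

/-- **Theorem (`C2Sep12`).** Let `R` be a ring, `n` its prime radical, `R̄ = R/n` (realized
by a surjective `π` with kernel `n`).  TFAE: (1) `R` has a left Artinian left quotient ring;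
(2) (a) `R̄` is a left Goldie ring, (b) `n` is nilpotent, (c') there is a submonoid
`C'' ⊆ C` whose image in `R̄` is `C̄`, (d) for `1 ≤ i ≤ ν` the `R̄`-module `f_i` contains no
infinite direct sum of nonzero submodules, (e) right multiplication by each `c̄ ∈ C̄` on
`f_i` is injective.  Moreover, if these conditions hold then for any such submonoid `C''`:
`C''` is a left Ore set in `R`, `C''⁻¹R = Q`, `C''⁻¹n` is the prime radical of `Q` and is
nilpotent of nilpotency degree `ν`, and `Q/C''⁻¹n → Q̄`, `c⁻¹r ↦ c̄⁻¹r̄`, is a ring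
isomorphism (encoded by a surjective `θ : Q → Q̄` with kernel `C''⁻¹n` and `θ ∘ φ = ψ ∘ π`). -/
theorem left_artinian_left_quotient_ring_criterion_lifted_submonoid
    {R : Type u} [Ring R] (Rbar : Type v) [Ring Rbar] (π : R →+* Rbar)
    (hπsurj : Function.Surjective π) (hπker : RingHom.ker π = primeRadical R) :
    (HasArtinianLeftQuot R ↔
      (IsLeftGoldie Rbar ∧
        IsNilpotentIdeal (primeRadical R) ∧
        (∃ C'' : Submonoid R, (↑C'' : Set R) ⊆ regSet R ∧
          π '' (↑C'' : Set R) = {x : Rbar | IsRegElem x}) ∧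
        (∀ i : ℕ, 1 ≤ i → primeRadical R ^ i ≠ ⊥ → NoInfiniteIndepFamily R (fMod π i)) ∧
        (∀ i : ℕ, 1 ≤ i → primeRadical R ^ i ≠ ⊥ →
          ∀ c : R, IsRegElem (π c) →
            ∀ (x : R) (hx : x ∈ primeRadical R ^ i) (hxc : x * c ∈ primeRadical R ^ i),
              fMk π i (x * c) hxc = 0 → fMk π i x hx = 0))) ∧
    (HasArtinianLeftQuot R →
      ∀ C'' : Submonoid R, (↑C'' : Set R) ⊆ regSet R →
        π '' (↑C'' : Set R) = {x : Rbar | IsRegElem x} →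
        IsLeftOreSubset (↑C'' : Set R) ∧
        ∀ d : LeftQuotData R, IsArtinianRing d.Q →
          (∀ q : d.Q, ∃ c ∈ C'', ∃ r : R, d.φ c * q = d.φ r) ∧
          ((↑(primeRadical d.Q) : Set d.Q) =
            {q : d.Q | ∃ c ∈ C'', ∃ a ∈ primeRadical R, d.φ c * q = d.φ a}) ∧
          IsNilpotentIdeal (primeRadical d.Q) ∧
          (∀ k : ℕ, primeRadical d.Q ^ k = ⊥ ↔ primeRadical R ^ k = ⊥) ∧
          ∃ (e : LeftQuotData Rbar) (θ : d.Q →+* e.Q),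
            Function.Surjective θ ∧ RingHom.ker θ = primeRadical d.Q ∧
              θ.comp d.φ = e.φ.comp π) := by
  refine ⟨⟨?_, ?_⟩, ?_⟩
  · rintro ⟨⟨Q, φ, h⟩, hQ⟩
    have hQ : IsArtinianRing Q := hQ
    obtain ⟨E, _, ψ, θ, hθ, -, -, hψ, hreg⟩ := h.exists_reduction hπsurj hπker
    have := hθ.isArtinianRing
    refine ⟨hψ.isLeftGoldie, ?_, ⟨h.regSubmonoid, subset_rfl, h.image_regSubmonoid hπsurj hπker⟩,
      fun i _ _ => h.noInfiniteIndepFamily_fMod hπsurj hπker i, fun i _ _ c hc x hx hxc =>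
        h.fMk_eq_zero_of_mul hπsurj hπker ((hreg c).mp hc)⟩
    obtain ⟨k, hk⟩ := exists_primeRadical_pow_eq_bot Q
    exact isNilpotentIdeal_of_pow_eq_bot ((h.primeRadical_pow_eq_bot_iff k).mp hk)
  · rintro ⟨hG, hnil, ⟨S, hreg, hS⟩, hd, he⟩
    exact hasArtinianLeftQuot_of_lifted_submonoid hπsurj hπker hG hnil hreg hS hd he
  · rintro ⟨d₀, hd₀⟩ S hreg hS
    refine ⟨d₀.quot.isLeftOreSubset hπsurj hπker hreg hS, fun d hd => ?_⟩
    refine ⟨d.quot.exists_mem_submonoid hπsurj hπker hS,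
      d.quot.primeRadical_eq_setOf hπsurj hπker hreg hS, ?_,
      d.quot.primeRadical_pow_eq_bot_iff, ?_⟩
    · obtain ⟨k, hk⟩ := exists_primeRadical_pow_eq_bot d.Q
      exact isNilpotentIdeal_of_pow_eq_bot hk
    · obtain ⟨E, _, ψ, θ, hθ, hθker, hcomp, hψ, -⟩ := d.quot.exists_reduction hπsurj hπker
      exact ⟨⟨E, ψ, hψ⟩, θ, hθ, hθker, hcomp⟩
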